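/- Let G be a numeration system with coefficients a_0 ≥ a_1 ≥ … ≥ a_{d−1} ≥ 1, irreducible characteristic polynomial and Pisot characteristic root β. Then for every cylinder set Z, μ(Z) = λ(ψ_β(𝒦_Z)), where λ is one-dimensional Lebesgue measure and 𝒦_Z is the set of all regular digit sequences lying in Z; that is, the extended β-adic Monna map ψ_β transports the measure μ to Lebesgue measure on [0,1). -/

import Mathlib

open scoped BigOperators
open scoped Classical

/-- A numeration system `G = (G_n)` defined by a linear recurrence with
nonincreasing positive coefficients `a_0 ≥ a_1 ≥ … ≥ a_{d-1} ≥ 1`, together with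
the regular (greedy) digit expansion `dig n k = ε_k(n)` of every nonnegative integer. -/
structure NumerationSystem where
  d : ℕ
  hd : 1 ≤ d
  a : ℕ → ℕ
  ha_anti : ∀ i j, i ≤ j → j < d → a j ≤ a i
  ha_pos : ∀ i, i < d → 1 ≤ a i
  G : ℕ → ℕ
  hG0 : G 0 = 1
  hG_small : ∀ k, 0 < k → k < d → G k = (∑ i ∈ Finset.range k, a i * G (k - 1 - i)) + 1
  hG_rec : ∀ n : ℕ, G (n + d) = ∑ i ∈ Finset.range d, a i * G (n + d - 1 - i)
  dig : ℕ → ℕ → ℕ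
  hdig_fin : ∀ n : ℕ, ∃ K, (∀ k, K ≤ k → dig n k = 0) ∧ n = ∑ k ∈ Finset.range K, dig n k * G k
  hdig_reg : ∀ n K, ∑ k ∈ Finset.range K, dig n k * G k < G K

namespace NumerationSystem

/-- The characteristic polynomial `X^d - a_0 X^{d-1} - … - a_{d-1}` of the numeration system. -/
noncomputable def charPoly (S : NumerationSystem) : Polynomial ℤ :=
  Polynomial.X ^ S.d -
    ∑ i ∈ Finset.range S.d, Polynomial.C (S.a i : ℤ) * Polynomial.X ^ (S.d - 1 - i)

/-- `β` is the characteristic root of `S`: the characteristic polynomial is irreducible,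
`β` is a root, `β > 1`, and every other complex root has modulus `< 1` (so `β` is Pisot). -/
def IsCharRoot (S : NumerationSystem) (β : ℝ) : Prop :=
  Irreducible (S.charPoly.map (Int.castRingHom ℚ)) ∧
  (Polynomial.aeval β) S.charPoly = 0 ∧ 1 < β ∧
  ∀ z : ℂ, (Polynomial.aeval z) S.charPoly = 0 → z ≠ (β : ℂ) → ‖z‖ < 1

/-- `F_{K,r}` : the number of `n < G (K+r)` whose regular expansion starts with the word `w`. -/
noncomputable def F (S : NumerationSystem) (w : ℕ → ℕ) (K r : ℕ) : ℕ :=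
  ((Finset.range (S.G (K + r))).filter (fun n => ∀ i, i < K → S.dig n i = w i)).card

/-- The measure `μ` of the cylinder set given by the word `w` of length `K`. -/
noncomputable def mu (S : NumerationSystem) (β : ℝ) (w : ℕ → ℕ) (K : ℕ) : ℝ :=
  (∑ j ∈ Finset.range S.d,
      ((S.F w K j : ℝ) - ∑ i ∈ Finset.range j, (S.a i : ℝ) * (S.F w K (j - 1 - i) : ℝ))
        * β ^ (S.d - 1 - j)) /
    (β ^ K * ∑ i ∈ Finset.range S.d, β ^ i)

/-- The extended `β`-adic Monna map on digit sequences: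
`ψ_β(x) = ∑_{k ≥ 0} ∑_{i < x_k} μ(Z(x_0,…,x_{k-1},i))`. -/
noncomputable def psiSeq (S : NumerationSystem) (β : ℝ) (x : ℕ → ℕ) : ℝ :=
  ∑' k : ℕ, ∑ i ∈ Finset.range (x k), S.mu β (fun m => if m < k then x m else i) (k + 1)

/-- The extended `β`-adic Monna map on integers (via the regular `G`-expansion). -/
noncomputable def psi (S : NumerationSystem) (β : ℝ) (n : ℕ) : ℝ :=
  S.psiSeq β (S.dig n)

/-- A digit sequence is regular if all its partial sums satisfy the greedy condition. -/
def RegularSeq (S : NumerationSystem) (x : ℕ → ℕ) : Prop :=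
  ∀ K, ∑ k ∈ Finset.range K, x k * S.G k < S.G K

/-- A finite word of length `K` is a regular digit string. -/
def RegularWord (S : NumerationSystem) (w : ℕ → ℕ) (K : ℕ) : Prop :=
  ∀ K', K' ≤ K → ∑ k ∈ Finset.range K', w k * S.G k < S.G K'

/-- The Galois closure `K = ℚ(β_1,…,β_d)` of `ℚ(β)`, realized inside `ℂ` as the field
generated by all roots of the characteristic polynomial. -/
noncomputable def galoisClosure (S : NumerationSystem) : IntermediateField ℚ ℂ :=
  IntermediateField.adjoin ℚ {z : ℂ | (Polynomial.aeval z) S.charPoly = 0}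

/-- `k` is maximal with `a_0 = a_1 = … = a_k`. -/
def IsPlateau (S : NumerationSystem) (k : ℕ) : Prop :=
  k < S.d ∧ (∀ i, i ≤ k → S.a i = S.a 0) ∧ (k + 1 < S.d → S.a (k + 1) ≠ S.a 0)

/-- `βc 0, …, βc (d-1)` enumerate the (distinct) roots of the characteristic polynomial and
`b` gives the coefficients in the explicit formula `G_n = ∑_j b_j β_j^n`. -/
def IsRootData (S : NumerationSystem) (βc b : ℕ → ℂ) : Prop :=
  (∀ j, j < S.d → (Polynomial.aeval (βc j)) S.charPoly = 0) ∧
  (∀ j j', j < S.d → j' < S.d → βc j = βc j' → j = j') ∧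
  ∀ n : ℕ, (S.G n : ℂ) = ∑ j ∈ Finset.range S.d, b j * βc j ^ n

end NumerationSystem

/-- The maximal digit pattern: `ε_i = a_0` if `(k+1) ∤ i` or `i = 0`, and `ε_i = a_0 - 1`
otherwise. -/
def maxPattern (a0 k i : ℕ) : ℕ :=
  if (k + 1) ∣ i ∧ i ≠ 0 then a0 - 1 else a0

/-- The constant `A = 1 + ∑_j a_0 b_j/(1-β_j) - ∑_j b_j/(1-β_j^{k+1})` from the corner
analysis (for a corner coordinate equal to 1). -/
noncomputable def cornerA (S : NumerationSystem) (βc b : ℕ → ℂ) (k : ℕ) : ℂ :=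
  1 + ∑ j ∈ Finset.range S.d, (S.a 0 : ℂ) * b j / (1 - βc j)
    - ∑ j ∈ Finset.range S.d, b j / (1 - βc j ^ (k + 1))

/-- The coefficient `c_j^{(i)} = ∑_{m ≥ 0} b_j ε_{n_0+m}(N) β_j^m` (corner coordinate 0). -/
noncomputable def cornerC0 (S : NumerationSystem) (βc b : ℕ → ℂ) (N n0 j : ℕ) : ℂ :=
  ∑' m : ℕ, (S.dig N (n0 + m) : ℂ) * b j * βc j ^ m

/-- The coefficient `c_j^{(i)}` for a corner coordinate equal to 1. -/
noncomputable def cornerC1 (S : NumerationSystem) (βc b : ℕ → ℂ) (k N n1 j : ℕ) : ℂ :=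
  cornerC0 S βc b N n1 j - (S.a 0 : ℂ) * b j / (1 - βc j)
    + b j * βc j ^ ((n1 + k) / (k + 1) * (k + 1) - n1) / (1 - βc j ^ (k + 1))

/-- Lexicographic comparison of words of length `n`, reading the highest digit first:
`w <_lex w'` iff they differ at some position `m` with `w m < w' m` and agree above `m`. -/
def LexLtBelow (n : ℕ) (w w' : ℕ → ℕ) : Prop :=
  ∃ m, m < n ∧ w m < w' m ∧ ∀ j, m < j → j < n → w j = w' j

/-- The exponent `H` of the corner avoidance theorem. -/
noncomputable def cornerH {s : ℕ} (h : Fin s → ℕ) : ℕ :=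
  if ∀ i, h i = 0 then 2 else if ∀ i, h i = 1 then s else 1 + ∑ i, h i

/-- A sequence `(x_n)_{n>0}` in `[0,1)^s` is uniformly distributed modulo 1. -/
def IsUniformlyDistributed {s : ℕ} (x : ℕ → Fin s → ℝ) : Prop :=
  ∀ a b : Fin s → ℝ, (∀ i, 0 ≤ a i) → (∀ i, a i ≤ b i) → (∀ i, b i ≤ 1) →
    Filter.Tendsto
      (fun N : ℕ =>
        (((Finset.Icc 1 N).filter fun n => ∀ i, a i ≤ x n i ∧ x n i < b i).card : ℝ) / (N : ℝ))
      Filter.atTop (nhds (∏ i, (b i - a i)))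

/-!
The weights `μ(Z(w₀, …, w_{K-1}))` are consistent: the weight of a word is the sum of the weights of
its one-digit extensions. Hence the partial sums `L(w)` of the Monna map attach to each word `w` an
interval `[L(w), L(w) + μ(w)]` such that the intervals of the extensions of `w`, placed side by side
in increasing order of the last digit, fill that of `w`. As `μ(w) → 0` along every sequence, `ψ_β`
maps `x` to the only common point of the intervals of its prefixes, so the image of a cylinder lies
between `[L(w), L(w) + μ(w))` and the closed interval. For a point `t` of the half-open interval a
preimage is found digit by digit; it is regular since all its prefixes have positive weight, and
words that are not regular have weight zero.

Consistency has two sources. The integers below `a_t G_{M-1} + ⋯ + a_{t+q-1} G_{M-q}` split into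
translates of `[0, G_{M-1})`, `[0, G_{M-2})`, … along which the lower digits do not change, so that
`F_{K,r}` obeys the recurrence of `G`. And the numerator of `μ` is a linear functional of
`r ↦ F_{K,r}` which the shift `r ↦ r + 1` multiplies by `β`.
-/

section CylinderContent

open Filter Function MeasureTheory PiNat Set Topology

theorem exists_mem_cylinder_forall_ge {E : ℕ → Type*} {p : (∀ n, E n) → ℕ → Prop}
    (hcongr : ∀ {v w : ∀ n, E n} {k : ℕ}, v ∈ cylinder w k → p w k → p v k)
    (hstep : ∀ (w : ∀ n, E n) (k : ℕ), p w k → ∃ v ∈ cylinder w k, p v (k + 1))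
    {w : ∀ n, E n} {K : ℕ} (h : p w K) : ∃ x ∈ cylinder w K, ∀ k, K ≤ k → p x k := by
  choose! next next_mem p_next using hstep
  let s : ℕ → ∀ n, E n := Nat.rec w fun n v => next v (K + n)
  have hs (n : ℕ) : p (s n) (K + n) := by
    induction n with
    | zero => exact h
    | succ n ih => exact p_next _ _ ih
  have s_stable {m n : ℕ} (hmn : m ≤ n) : s n ∈ cylinder (s m) (K + m) := by
    induction n, hmn using Nat.le_induction with
    | base => exact self_mem_cylinder _ _
    | succ n hmn ih =>
      have hnext : s (n + 1) ∈ cylinder (s n) (K + n) := next_mem _ _ (hs n)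
      exact fun i hi => (hnext i (by omega)).trans (ih i hi)
  let x : ∀ n, E n := fun i => s (i + 1) i
  have hx (n : ℕ) : x ∈ cylinder (s n) (K + n) := by
    intro i hi
    rcases le_total n (i + 1) with hni | hin
    · exact s_stable hni i hi
    · exact (s_stable hin i (by omega)).symm
  refine ⟨x, hx 0, fun k hk => ?_⟩
  obtain ⟨n, rfl⟩ := Nat.exists_eq_add_of_le hk
  exact hcongr (hx n) (hs n)

theorem exists_sum_range_le_and_lt {f : ℕ → ℝ} {a u : ℝ} (hf : HasSum f a) (hu₀ : 0 ≤ u)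
    (hu : u < a) :
    ∃ n, ∑ i ∈ Finset.range n, f i ≤ u ∧ u < ∑ i ∈ Finset.range (n + 1), f i := by
  obtain ⟨n, hn, hn'⟩ := Nat.exists_not_and_succ_of_not_zero_of_exists
    (p := fun n => u < ∑ i ∈ Finset.range n, f i) (by simpa using hu₀)
    (hf.tendsto_sum_nat.eventually_const_lt hu).exists
  exact ⟨n, not_lt.1 hn, hn'⟩

/-- A consistent family of weights on the finite words over `ℕ`, as a measure induces on the
cylinders of `ℕ → ℕ`. The value `m w K` is the weight of the word `w 0, …, w (K - 1)`; the later
values of `w` are irrelevant. -/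
structure IsCylinderContent (m : (ℕ → ℕ) → ℕ → ℝ) : Prop where
  congr : ∀ {v w : ℕ → ℕ} {K : ℕ}, v ∈ cylinder w K → m v K = m w K
  nonneg : ∀ (w : ℕ → ℕ) (K : ℕ), 0 ≤ m w K
  hasSum : ∀ (w : ℕ → ℕ) (K : ℕ), HasSum (fun i => m (update w K i) (K + 1)) (m w K)

/-- The partial sums of the Monna map of `m`: the left endpoint of the interval that the Monna map
attaches to the word `x 0, …, x (k - 1)`. -/
noncomputable def monnaLeft (m : (ℕ → ℕ) → ℕ → ℝ) (x : ℕ → ℕ) (k : ℕ) : ℝ :=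
  ∑ j ∈ Finset.range k, ∑ i ∈ Finset.range (x j), m (update x j i) (j + 1)

/-- The Monna map of a family of weights `m`: the total weight of the cylinders which branch off
from `x` through a smaller digit. -/
noncomputable def monnaMap (m : (ℕ → ℕ) → ℕ → ℝ) (x : ℕ → ℕ) : ℝ :=
  ∑' j : ℕ, ∑ i ∈ Finset.range (x j), m (update x j i) (j + 1)

theorem monnaLeft_succ (m : (ℕ → ℕ) → ℕ → ℝ) (x : ℕ → ℕ) (k : ℕ) :
    monnaLeft m x (k + 1) =
      monnaLeft m x k + ∑ i ∈ Finset.range (x k), m (update x k i) (k + 1) :=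
  Finset.sum_range_succ _ _

theorem mem_cylinder_update_succ_iff {x w : ℕ → ℕ} {K i : ℕ} :
    x ∈ cylinder (update w K i) (K + 1) ↔ x ∈ cylinder w K ∧ x K = i := by
  simp only [mem_cylinder_iff, Nat.forall_lt_succ_right, update_self]
  refine and_congr_left' (forall₂_congr fun j hj => ?_)
  rw [update_of_ne hj.ne]

theorem update_mem_cylinder_update {x y : ℕ → ℕ} {k : ℕ} (h : y ∈ cylinder x k) (i : ℕ) :
    update y k i ∈ cylinder (update x k i) (k + 1) := by
  refine mem_cylinder_update_succ_iff.2 ⟨fun j hj => ?_, update_self k i y⟩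
  rw [update_of_ne hj.ne, h j hj]

namespace IsCylinderContent

variable {m : (ℕ → ℕ) → ℕ → ℝ} (hm : IsCylinderContent m)

include hm

theorem antitone (x : ℕ → ℕ) : Antitone (m x) := by
  refine antitone_nat_of_succ_le fun k => ?_
  simpa only [update_eq_self] using
    le_hasSum (hm.hasSum x k) (x k) fun i _ => hm.nonneg (update x k i) (k + 1)

theorem monnaLeft_congr {v w : ℕ → ℕ} {K : ℕ} (h : v ∈ cylinder w K) :
    monnaLeft m v K = monnaLeft m w K := by
  refine Finset.sum_congr rfl fun j hj => ?_
  have hjK : j < K := Finset.mem_range.1 hj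
  rw [h j hjK]
  exact Finset.sum_congr rfl fun i _ =>
    hm.congr (update_mem_cylinder_update (cylinder_anti w hjK.le h) i)

theorem monnaLeft_update_succ (w : ℕ → ℕ) (k i : ℕ) :
    monnaLeft m (update w k i) (k + 1) =
      monnaLeft m w k + ∑ j ∈ Finset.range i, m (update w k j) (k + 1) := by
  rw [monnaLeft_succ, hm.monnaLeft_congr (update_mem_cylinder w k i)]
  simp only [update_self, update_idem]

theorem monotone_monnaLeft (x : ℕ → ℕ) : Monotone (monnaLeft m x) := by
  refine monotone_nat_of_le_succ fun k => ?_
  rw [monnaLeft_succ]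
  exact le_add_of_nonneg_right (Finset.sum_nonneg fun i _ => hm.nonneg _ _)

theorem antitone_monnaLeft_add (x : ℕ → ℕ) : Antitone fun k => monnaLeft m x k + m x k := by
  refine antitone_nat_of_succ_le fun k => ?_
  have hsum : ∑ i ∈ Finset.range (x k + 1), m (update x k i) (k + 1) ≤ m x k :=
    sum_le_hasSum _ (fun i _ => hm.nonneg _ _) (hm.hasSum x k)
  rw [Finset.sum_range_succ, update_eq_self] at hsum
  rw [monnaLeft_succ, add_assoc]
  gcongr

theorem tendsto_monnaLeft (x : ℕ → ℕ) : Tendsto (monnaLeft m x) atTop (𝓝 (monnaMap m x)) := by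
  have hbound (n : ℕ) : monnaLeft m x n ≤ m x 0 := by
    have hle := hm.antitone_monnaLeft_add x n.zero_le
    simp only [monnaLeft, Finset.sum_range_zero, zero_add] at hle
    exact (le_add_of_nonneg_right (hm.nonneg x n)).trans hle
  exact (summable_of_sum_range_le (fun _ => Finset.sum_nonneg fun _ _ => hm.nonneg _ _)
    hbound).hasSum.tendsto_sum_nat

theorem monnaMap_mem_Icc (x : ℕ → ℕ) (K : ℕ) :
    monnaMap m x ∈ Icc (monnaLeft m x K) (monnaLeft m x K + m x K) := by
  refine ⟨(hm.monotone_monnaLeft x).ge_of_tendsto (hm.tendsto_monnaLeft x) K,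
    le_of_tendsto (hm.tendsto_monnaLeft x) ?_⟩
  filter_upwards [eventually_ge_atTop K] with k hk
  exact (le_add_of_nonneg_right (hm.nonneg x k)).trans (hm.antitone_monnaLeft_add x hk)

theorem image_monnaMap_cylinder_subset (w : ℕ → ℕ) (K : ℕ) :
    monnaMap m '' cylinder w K ⊆ Icc (monnaLeft m w K) (monnaLeft m w K + m w K) := by
  rintro _ ⟨x, hx, rfl⟩
  rw [← hm.monnaLeft_congr hx, ← hm.congr hx]
  exact hm.monnaMap_mem_Icc x K

theorem exists_update_mem_Ico {t : ℝ} {w : ℕ → ℕ} {k : ℕ}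
    (ht : t ∈ Ico (monnaLeft m w k) (monnaLeft m w k + m w k)) :
    ∃ i, t ∈ Ico (monnaLeft m (update w k i) (k + 1))
      (monnaLeft m (update w k i) (k + 1) + m (update w k i) (k + 1)) := by
  obtain ⟨i, hle, hlt⟩ := exists_sum_range_le_and_lt (hm.hasSum w k)
    (sub_nonneg.2 ht.1) (sub_lt_iff_lt_add'.2 ht.2)
  rw [Finset.sum_range_succ] at hlt
  refine ⟨i, ?_⟩
  rw [hm.monnaLeft_update_succ]
  constructor <;> linarith

theorem Ico_subset_image_monnaMap (hlim : ∀ x, Tendsto (m x) atTop (𝓝 0)) (w : ℕ → ℕ) (K : ℕ) :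
    Ico (monnaLeft m w K) (monnaLeft m w K + m w K) ⊆
      monnaMap m '' ({x | ∀ k, 0 < m x k} ∩ cylinder w K) := by
  intro t ht
  obtain ⟨x, hxw, hx⟩ := exists_mem_cylinder_forall_ge
    (p := fun v k => t ∈ Ico (monnaLeft m v k) (monnaLeft m v k + m v k))
    (fun hv ht => by rwa [hm.monnaLeft_congr hv, hm.congr hv])
    (fun v k ht => (hm.exists_update_mem_Ico ht).imp' (update v k) fun i hi =>
      ⟨update_mem_cylinder v k i, hi⟩) ht
  have hpos (k : ℕ) : 0 < m x k := by
    obtain ⟨hle, hlt⟩ := hx (max K k) (le_max_left K k)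
    have : 0 < m x (max K k) := by linarith
    exact this.trans_le (hm.antitone x (le_max_right K k))
  have hdist : ∀ᶠ k in atTop, |monnaMap m x - t| ≤ m x k := by
    filter_upwards [eventually_ge_atTop K] with k hk
    obtain ⟨hle, hlt⟩ := hx k hk
    obtain ⟨hle', hle''⟩ := hm.monnaMap_mem_Icc x k
    rw [abs_le]
    constructor <;> linarith
  have hzero : |monnaMap m x - t| ≤ 0 := ge_of_tendsto (hlim x) hdist
  exact ⟨x, ⟨hpos, hxw⟩, sub_eq_zero.1 (abs_nonpos_iff.1 hzero)⟩

theorem volume_image_monnaMap_inter_cylinder (hlim : ∀ x, Tendsto (m x) atTop (𝓝 0))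
    {X : Set (ℕ → ℕ)} (hX : ∀ x, (∀ k, 0 < m x k) → x ∈ X) (w : ℕ → ℕ) (K : ℕ) :
    volume (monnaMap m '' (X ∩ cylinder w K)) = ENNReal.ofReal (m w K) := by
  apply le_antisymm
  · calc volume (monnaMap m '' (X ∩ cylinder w K))
        ≤ volume (Icc (monnaLeft m w K) (monnaLeft m w K + m w K)) :=
          measure_mono ((image_mono inter_subset_right).trans
            (hm.image_monnaMap_cylinder_subset w K))
      _ = ENNReal.ofReal (m w K) := by rw [Real.volume_Icc, add_sub_cancel_left]
  · calc ENNReal.ofReal (m w K)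
        = volume (Ico (monnaLeft m w K) (monnaLeft m w K + m w K)) := by
          rw [Real.volume_Ico, add_sub_cancel_left]
      _ ≤ volume (monnaMap m '' (X ∩ cylinder w K)) :=
          measure_mono ((hm.Ico_subset_image_monnaMap hlim w K).trans
            (image_mono (inter_subset_inter_left _ hX)))

end IsCylinderContent

end CylinderContent

section RootFunctional

/-- The defect at `j` of the recurrence `f j = a 0 * f (j - 1) + ⋯ + a (j - 1) * f 0`. -/
def recurrenceDefect (a f : ℕ → ℝ) (j : ℕ) : ℝ :=
  f j - ∑ i ∈ Finset.range j, a i * f (j - 1 - i)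

/-- A linear functional on sequences `f`, depending on `f 0, …, f (d - 1)`. On the solutions of the
recurrence with characteristic polynomial `X ^ d - a 0 * X ^ (d - 1) - ⋯ - a (d - 1)` it is, up to a
constant factor, the coefficient of the solution `β ^ n`. -/
def rootFunctional (d : ℕ) (a : ℕ → ℝ) (β : ℝ) (f : ℕ → ℝ) : ℝ :=
  ∑ j ∈ Finset.range d, recurrenceDefect a f j * β ^ (d - 1 - j)

theorem recurrenceDefect_comp_succ (a f : ℕ → ℝ) (j : ℕ) :
    recurrenceDefect a (fun n => f (n + 1)) j = recurrenceDefect a f (j + 1) + a j * f 0 := by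
  have hsum : ∑ i ∈ Finset.range j, a i * f (j - 1 - i + 1) =
      ∑ i ∈ Finset.range j, a i * f (j - i) := by
    refine Finset.sum_congr rfl fun i hi => ?_
    rw [show j - 1 - i + 1 = j - i by have := Finset.mem_range.1 hi; omega]
  simp only [recurrenceDefect, Finset.sum_range_succ, hsum, Nat.add_sub_cancel, Nat.sub_self]
  ring

theorem rootFunctional_comp_succ {d : ℕ} {a f : ℕ → ℝ} {β : ℝ}
    (hβ : β ^ d = ∑ i ∈ Finset.range d, a i * β ^ (d - 1 - i))
    (hf : recurrenceDefect a f d = 0) :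
    rootFunctional d a β (fun n => f (n + 1)) = β * rootFunctional d a β f := by
  calc rootFunctional d a β (fun n => f (n + 1))
      = ∑ j ∈ Finset.range d, recurrenceDefect a f (j + 1) * β ^ (d - (j + 1)) + f 0 * β ^ d := by
        rw [hβ, Finset.mul_sum, ← Finset.sum_add_distrib]
        refine Finset.sum_congr rfl fun j _ => ?_
        rw [recurrenceDefect_comp_succ, show d - (j + 1) = d - 1 - j by omega]
        ring
    _ = ∑ j ∈ Finset.range (d + 1), recurrenceDefect a f j * β ^ (d - j) := by
        rw [Finset.sum_range_succ']
        simp only [recurrenceDefect, Finset.sum_range_zero, Nat.sub_zero, sub_zero]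
    _ = β * rootFunctional d a β f := by
        rw [Finset.sum_range_succ, hf, zero_mul, add_zero, rootFunctional, Finset.mul_sum]
        refine Finset.sum_congr rfl fun j hj => ?_
        rw [show d - j = d - 1 - j + 1 by have := Finset.mem_range.1 hj; omega, pow_succ]
        ring

theorem hasSum_rootFunctional {ι : Type*} {g : ι → ℕ → ℝ} {f : ℕ → ℝ}
    (h : ∀ j, HasSum (fun i => g i j) (f j)) (d : ℕ) (a : ℕ → ℝ) (β : ℝ) :
    HasSum (fun i => rootFunctional d a β (g i)) (rootFunctional d a β f) :=
  hasSum_sum fun j _ =>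
    ((h j).sub (hasSum_sum fun i _ => (h (j - 1 - i)).mul_left (a i))).mul_right _

end RootFunctional

theorem eq_and_eq_of_add_mul_eq_add_mul {g a b r s : ℕ} (hr : r < g) (hs : s < g)
    (h : r + a * g = s + b * g) : a = b ∧ r = s := by
  have hg : 0 < g := by omega
  have ha := (Nat.div_mod_unique hg).2 ⟨by rw [mul_comm g a], hr⟩
  have hb := (Nat.div_mod_unique hg).2 ⟨by rw [mul_comm g b], hs⟩
  rw [h] at ha
  exact ⟨ha.1.symm.trans hb.1, ha.2.symm.trans hb.2⟩

namespace NumerationSystem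

section Counting

open Function Finset PiNat

variable (S : NumerationSystem)

/-- The initial part `a t * G (M - 1) + ⋯ + a (t + q - 1) * G (M - q)` of the recurrence for `G M`,
with the coefficients shifted by `t`. It has its meaning for `q ≤ M`. -/
def recSum (t q M : ℕ) : ℕ :=
  ∑ s ∈ range q, S.a (t + s) * S.G (M - 1 - s)

theorem recSum_succ (t q M : ℕ) :
    S.recSum t (q + 1) (M + 1) = S.a t * S.G M + S.recSum (t + 1) q M := by
  rw [recSum, sum_range_succ', add_comm]
  congr 1
  refine sum_congr rfl fun s _ => ?_
  rw [show t + (s + 1) = t + 1 + s by ring, show M + 1 - 1 - (s + 1) = M - 1 - s by omega]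

theorem recSum_mono_right (t M : ℕ) {p q : ℕ} (hpq : p ≤ q) : S.recSum t p M ≤ S.recSum t q M :=
  sum_le_sum_of_subset (range_mono hpq)

theorem recSum_le_recSum_zero {t q : ℕ} (htq : t + q ≤ S.d) (M : ℕ) :
    S.recSum t q M ≤ S.recSum 0 q M := by
  refine sum_le_sum fun s hs => Nat.mul_le_mul_right _ (S.ha_anti _ _ (by omega) ?_)
  have := mem_range.1 hs
  omega

theorem G_add_d (n : ℕ) : S.G (n + S.d) = S.recSum 0 S.d (n + S.d) := by
  simp only [recSum, zero_add, S.hG_rec]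

theorem G_of_lt_d {k : ℕ} (hk : k < S.d) : S.G k = S.recSum 0 k k + 1 := by
  rcases k.eq_zero_or_pos with rfl | hk₀
  · simp only [recSum, S.hG0, range_zero, sum_empty, zero_add]
  · simp only [recSum, zero_add, S.hG_small k hk₀ hk]

theorem recSum_le_G {t q M : ℕ} (htq : t + q ≤ S.d) (hqM : q ≤ M) : S.recSum t q M ≤ S.G M := by
  refine (S.recSum_le_recSum_zero htq M).trans ?_
  rcases lt_or_ge M S.d with hM | hM
  · rw [S.G_of_lt_d hM]
    exact (S.recSum_mono_right 0 M hqM).trans (Nat.le_succ _)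
  · obtain ⟨n, rfl⟩ := Nat.exists_eq_add_of_le' hM
    rw [G_add_d]
    exact S.recSum_mono_right 0 _ (by omega)

theorem G_monotone : Monotone S.G := by
  refine monotone_nat_of_le_succ fun n => ?_
  have hrec : S.a 0 * S.G n ≤ S.G (n + 1) := by
    simpa [recSum] using S.recSum_le_G (t := 0) (q := 1) S.hd (Nat.le_add_left 1 n)
  exact (Nat.le_mul_of_pos_left _ (S.ha_pos 0 S.hd)).trans hrec

theorem G_succ_le (k : ℕ) : S.G (k + 1) ≤ (S.a 0 + 1) * S.G k := by
  rw [add_one_mul]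
  rcases lt_or_ge (k + 1) S.d with hk | hk
  · rw [S.G_of_lt_d hk, recSum_succ, add_assoc, S.G_of_lt_d (by omega : k < S.d)]
    gcongr
    exact S.recSum_le_recSum_zero (by omega) k
  · obtain ⟨e, he⟩ := Nat.exists_eq_add_of_le' S.hd
    obtain ⟨n, hn⟩ := Nat.exists_eq_add_of_le' hk
    rw [hn, G_add_d, ← hn, he, recSum_succ]
    gcongr
    exact S.recSum_le_G (by omega) (by omega)

theorem dig_le (n k : ℕ) : S.dig n k ≤ S.a 0 := by
  have hdig := S.hdig_reg n (k + 1)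
  rw [sum_range_succ] at hdig
  refine Nat.le_of_lt_succ (Nat.lt_of_mul_lt_mul_right (a := S.G k) ?_)
  exact (le_add_self.trans_lt hdig).trans_le (S.G_succ_le k)

theorem dig_eq_zero_of_lt_G {n L k : ℕ} (hn : n < S.G L) (hk : L ≤ k) : S.dig n k = 0 := by
  obtain ⟨K, hK, hsum⟩ := S.hdig_fin n
  by_contra hne
  have hkK : k < K := not_le.1 fun h => hne (hK k h)
  have hle : S.G k ≤ n := calc
    S.G k ≤ S.dig n k * S.G k := Nat.le_mul_of_pos_left _ (Nat.pos_of_ne_zero hne)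
    _ ≤ ∑ j ∈ range K, S.dig n j * S.G j :=
      single_le_sum (f := fun j => S.dig n j * S.G j) (fun _ _ => Nat.zero_le _) (mem_range.2 hkK)
    _ = n := hsum.symm
  exact (hn.trans_le (S.G_monotone hk)).not_ge hle

theorem sum_dig_mul_G {n L : ℕ} (hn : n < S.G L) : ∑ k ∈ range L, S.dig n k * S.G k = n := by
  obtain ⟨K, hK, hsum⟩ := S.hdig_fin n
  have hL : ∀ k, L ≤ k → S.dig n k * S.G k = 0 := fun k hk => by
    rw [S.dig_eq_zero_of_lt_G hn hk, zero_mul]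
  have hK' : ∀ k, K ≤ k → S.dig n k * S.G k = 0 := fun k hk => by rw [hK k hk, zero_mul]
  rw [← eventually_constant_sum hL (le_max_left L K),
    eventually_constant_sum hK' (le_max_right L K), ← hsum]

variable {S} in
theorem RegularWord.mem_cylinder {x y : ℕ → ℕ} {K : ℕ} (hx : S.RegularWord x K)
    (hy : S.RegularWord y K)
    (h : ∑ k ∈ range K, x k * S.G k = ∑ k ∈ range K, y k * S.G k) : x ∈ cylinder y K := by
  induction K with
  | zero => simp only [cylinder_zero, Set.mem_univ]
  | succ K ih =>
    rw [sum_range_succ, sum_range_succ] at h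
    obtain ⟨htop, hlow⟩ :=
      eq_and_eq_of_add_mul_eq_add_mul (hx K K.le_succ) (hy K K.le_succ) h
    have hcyl := ih (fun k hk => hx k (hk.trans K.le_succ)) (fun k hk => hy k (hk.trans K.le_succ))
      hlow
    exact Nat.forall_lt_succ_right.2 ⟨hcyl, htop⟩

theorem regularWord_dig (n K : ℕ) : S.RegularWord (S.dig n) K := fun k _ => S.hdig_reg n k

theorem dig_mul_G_add_mem_cylinder {L c m : ℕ} (hm : m < S.G L)
    (h : c * S.G L + m < S.G (L + 1)) : S.dig (c * S.G L + m) ∈ cylinder (S.dig m) L := by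
  refine (S.regularWord_dig _ L).mem_cylinder (S.regularWord_dig m L) ?_
  have hsum := S.sum_dig_mul_G h
  rw [sum_range_succ, add_comm (c * S.G L)] at hsum
  rw [S.sum_dig_mul_G hm, add_comm (c * S.G L)]
  exact (eq_and_eq_of_add_mul_eq_add_mul (S.hdig_reg _ L) hm hsum).2

/-- The number of integers `n < m` whose regular expansion starts with `w 0, …, w (K - 1)`. -/
noncomputable def prefixCount (w : ℕ → ℕ) (K m : ℕ) : ℕ :=
  m.count fun n => S.dig n ∈ cylinder w K

theorem F_eq_prefixCount (w : ℕ → ℕ) (K r : ℕ) :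
    S.F w K r = S.prefixCount w K (S.G (K + r)) := by
  rw [prefixCount, Nat.count_eq_card_filter_range]
  simp only [F, mem_cylinder_iff]

theorem prefixCount_mul_G_add_of_le {w : ℕ → ℕ} {K L c m : ℕ} (hKL : K ≤ L) (hm : m ≤ S.G L)
    (h : c * S.G L + m ≤ S.G (L + 1)) :
    S.prefixCount w K (c * S.G L + m) = S.prefixCount w K (c * S.G L) + S.prefixCount w K m := by
  rw [prefixCount, Nat.count_add]
  congr 1
  rw [prefixCount, Nat.count_eq_card_filter_range, Nat.count_eq_card_filter_range]
  congr 1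
  refine filter_congr fun n hn => ?_
  have hnm : n < m := mem_range.1 hn
  have hdig : S.dig (c * S.G L + n) ∈ cylinder (S.dig n) K :=
    cylinder_anti _ hKL (S.dig_mul_G_add_mem_cylinder (by omega) (by omega))
  rw [mem_cylinder_comm w, mem_cylinder_comm w, mem_cylinder_iff_eq.1 hdig]

theorem prefixCount_mul_G_add {w : ℕ → ℕ} {K L c m : ℕ} (hKL : K ≤ L) (hm : m ≤ S.G L)
    (h : c * S.G L + m ≤ S.G (L + 1)) :
    S.prefixCount w K (c * S.G L + m) =
      c * S.prefixCount w K (S.G L) + S.prefixCount w K m := by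
  rw [S.prefixCount_mul_G_add_of_le hKL hm h]
  congr 1
  replace h : c * S.G L ≤ S.G (L + 1) := (Nat.le_add_right _ _).trans h
  induction c with
  | zero => simp only [zero_mul, prefixCount, Nat.count_zero]
  | succ c ih =>
    rw [add_one_mul] at h ⊢
    rw [S.prefixCount_mul_G_add_of_le hKL le_rfl h, ih ((Nat.le_add_right _ _).trans h),
      add_one_mul]

theorem prefixCount_recSum (w : ℕ → ℕ) (K : ℕ) {t q : ℕ} (htq : t + q ≤ S.d) :
    S.prefixCount w K (S.recSum t q (K + q)) =
      ∑ s ∈ range q, S.a (t + s) * S.F w K (q - 1 - s) := by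
  induction q generalizing t with
  | zero => simp only [recSum, range_zero, sum_empty, prefixCount, Nat.count_zero]
  | succ q ih =>
    have hle := S.recSum_le_G htq (Nat.le_add_left (q + 1) K)
    rw [← add_assoc, recSum_succ] at hle ⊢
    rw [S.prefixCount_mul_G_add (Nat.le_add_right K q)
      (S.recSum_le_G (by omega) (Nat.le_add_left q K)) hle, ih (by omega), ← F_eq_prefixCount,
      sum_range_succ', add_comm]
    congr 1
    refine sum_congr rfl fun s _ => ?_
    rw [show t + (s + 1) = t + 1 + s by ring, show q + 1 - 1 - (s + 1) = q - 1 - s by omega]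

theorem sum_a_mul_F_le (w : ℕ → ℕ) (K : ℕ) {j : ℕ} (hj : j ≤ S.d) :
    ∑ i ∈ range j, S.a i * S.F w K (j - 1 - i) ≤ S.F w K j := by
  have hj₀ : 0 + j ≤ S.d := by rwa [zero_add]
  have hcount := S.prefixCount_recSum w K hj₀
  simp only [zero_add] at hcount
  rw [← hcount, F_eq_prefixCount]
  exact Nat.count_monotone _ (S.recSum_le_G hj₀ (Nat.le_add_left j K))

theorem F_d (w : ℕ → ℕ) (K : ℕ) :
    S.F w K S.d = ∑ i ∈ range S.d, S.a i * S.F w K (S.d - 1 - i) := by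
  simpa only [zero_add, ← G_add_d, ← F_eq_prefixCount] using
    S.prefixCount_recSum w K (t := 0) (q := S.d) (zero_add _).le

theorem F_congr {v w : ℕ → ℕ} {K : ℕ} (h : v ∈ cylinder w K) (r : ℕ) :
    S.F v K r = S.F w K r := by
  simp only [F_eq_prefixCount, prefixCount, mem_cylinder_iff_eq.1 h]

theorem F_succ (w : ℕ → ℕ) (K r : ℕ) :
    S.F w K (r + 1) = ∑ i ∈ range (S.a 0 + 1), S.F (update w K i) (K + 1) r := by
  simp only [F_eq_prefixCount, prefixCount, Nat.count_eq_card_filter_range,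
    mem_cylinder_update_succ_iff, ← filter_filter, add_right_comm K 1 r, ← add_assoc]
  exact card_eq_sum_card_fiberwise fun n _ =>
    mem_coe.2 (mem_range.2 (Nat.lt_succ_of_le (S.dig_le n K)))

theorem F_update_eq_zero (w : ℕ → ℕ) {K i : ℕ} (hi : S.a 0 < i) (r : ℕ) :
    S.F (update w K i) (K + 1) r = 0 := by
  rw [F_eq_prefixCount, prefixCount, Nat.count_iff_forall_not]
  intro n _ hn
  exact ((S.dig_le n K).trans_lt hi).ne (mem_cylinder_update_succ_iff.1 hn).2

theorem F_zero_le_one (w : ℕ → ℕ) (K : ℕ) : S.F w K 0 ≤ 1 := by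
  refine card_le_one.2 fun m hm n hn => ?_
  simp only [mem_filter, mem_range, add_zero] at hm hn
  rw [← S.sum_dig_mul_G hm.1, ← S.sum_dig_mul_G hn.1]
  refine sum_congr rfl fun k hk => ?_
  rw [hm.2 k (mem_range.1 hk), hn.2 k (mem_range.1 hk)]

theorem F_le_pow (w : ℕ → ℕ) (K r : ℕ) : S.F w K r ≤ (S.a 0 + 1) ^ r := by
  induction r generalizing w K with
  | zero => simpa only [pow_zero] using S.F_zero_le_one w K
  | succ r ih =>
    calc S.F w K (r + 1)
        = ∑ i ∈ range (S.a 0 + 1), S.F (update w K i) (K + 1) r := S.F_succ w K r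
      _ ≤ ∑ _i ∈ range (S.a 0 + 1), (S.a 0 + 1) ^ r := sum_le_sum fun i _ => ih _ _
      _ = (S.a 0 + 1) ^ (r + 1) := by rw [sum_const, card_range, smul_eq_mul, pow_succ']

theorem regularWord_of_F_ne_zero {w : ℕ → ℕ} {K r : ℕ} (h : S.F w K r ≠ 0) :
    S.RegularWord w K := by
  rw [F_eq_prefixCount, prefixCount, Nat.count_ne_iff_exists] at h
  obtain ⟨n, _, hn⟩ := h
  intro k hk
  calc ∑ j ∈ range k, w j * S.G j
      = ∑ j ∈ range k, S.dig n j * S.G j := sum_congr rfl fun j hj => by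
        rw [hn j ((mem_range.1 hj).trans_le hk)]
    _ < S.G k := S.hdig_reg n k

end Counting

section Measure

open Filter Function PiNat Polynomial Topology

variable (S : NumerationSystem) {β : ℝ}

theorem mu_eq_rootFunctional_div (β : ℝ) (w : ℕ → ℕ) (K : ℕ) :
    S.mu β w K = rootFunctional S.d (fun i => S.a i) β (fun r => S.F w K r) /
      (β ^ K * ∑ i ∈ Finset.range S.d, β ^ i) :=
  rfl

theorem mu_congr (β : ℝ) {v w : ℕ → ℕ} {K : ℕ} (h : v ∈ cylinder w K) :
    S.mu β v K = S.mu β w K := by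
  simp only [mu, S.F_congr h]

theorem recurrenceDefect_F_nonneg (w : ℕ → ℕ) (K : ℕ) {j : ℕ} (hj : j ≤ S.d) :
    0 ≤ recurrenceDefect (fun i => S.a i) (fun r => S.F w K r) j := by
  rw [recurrenceDefect, sub_nonneg]
  exact_mod_cast S.sum_a_mul_F_le w K hj

theorem recurrenceDefect_F_d (w : ℕ → ℕ) (K : ℕ) :
    recurrenceDefect (fun i => S.a i) (fun r => S.F w K r) S.d = 0 := by
  rw [recurrenceDefect, sub_eq_zero]
  exact_mod_cast S.F_d w K

theorem mu_nonneg (hβ : 0 ≤ β) (w : ℕ → ℕ) (K : ℕ) : 0 ≤ S.mu β w K := by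
  refine div_nonneg (Finset.sum_nonneg fun j hj => ?_) (by positivity)
  exact mul_nonneg (S.recurrenceDefect_F_nonneg w K (Finset.mem_range.1 hj).le) (by positivity)

theorem pow_d_eq_of_aeval_charPoly_eq_zero {A : Type*} [CommRing A] {z : A}
    (hz : aeval z S.charPoly = 0) :
    z ^ S.d = ∑ i ∈ Finset.range S.d, (S.a i : A) * z ^ (S.d - 1 - i) := by
  simpa [charPoly, sub_eq_zero] using hz

theorem hasSum_F (w : ℕ → ℕ) (K r : ℕ) :
    HasSum (fun i => (S.F (update w K i) (K + 1) r : ℝ)) (S.F w K (r + 1)) := by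
  rw [F_succ, Nat.cast_sum]
  refine hasSum_sum_of_ne_finset_zero fun i hi => ?_
  rw [S.F_update_eq_zero w (by simpa using hi), Nat.cast_zero]

theorem hasSum_mu (hroot : aeval β S.charPoly = 0) (hβ : β ≠ 0) (w : ℕ → ℕ) (K : ℕ) :
    HasSum (fun i => S.mu β (update w K i) (K + 1)) (S.mu β w K) := by
  have hsum := (hasSum_rootFunctional (S.hasSum_F w K) S.d (fun i => S.a i) β).div_const
    (β ^ (K + 1) * ∑ i ∈ Finset.range S.d, β ^ i)
  have hshift := rootFunctional_comp_succ (S.pow_d_eq_of_aeval_charPoly_eq_zero hroot)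
    (S.recurrenceDefect_F_d w K)
  rw [hshift, pow_succ', mul_assoc, mul_div_mul_left _ _ hβ, ← mul_assoc, ← pow_succ'] at hsum
  exact hsum

theorem isCylinderContent_mu (hroot : aeval β S.charPoly = 0) (hβ : 0 < β) :
    IsCylinderContent (S.mu β) where
  congr := S.mu_congr β
  nonneg := S.mu_nonneg hβ.le
  hasSum := S.hasSum_mu hroot hβ.ne'

theorem mu_le (hβ : 0 ≤ β) (w : ℕ → ℕ) (K : ℕ) :
    S.mu β w K ≤ (∑ j ∈ Finset.range S.d, ((S.a 0 + 1 : ℕ) : ℝ) ^ j * β ^ (S.d - 1 - j)) /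
      (∑ i ∈ Finset.range S.d, β ^ i) * β⁻¹ ^ K := by
  rw [inv_pow, ← div_eq_mul_inv, div_div, mul_comm _ (β ^ K), mu_eq_rootFunctional_div,
    rootFunctional]
  gcongr with j
  calc recurrenceDefect (fun i => S.a i) (fun r => S.F w K r) j
      ≤ S.F w K j := sub_le_self _ (by positivity)
    _ ≤ ((S.a 0 + 1 : ℕ) : ℝ) ^ j := by exact_mod_cast S.F_le_pow w K j

theorem tendsto_mu (hβ : 1 < β) (w : ℕ → ℕ) : Tendsto (S.mu β w) atTop (𝓝 0) := by
  have hβ₀ : 0 ≤ β := zero_le_one.trans hβ.le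
  have hpow := tendsto_pow_atTop_nhds_zero_of_lt_one (inv_nonneg.2 hβ₀) (inv_lt_one_of_one_lt₀ hβ)
  refine squeeze_zero (S.mu_nonneg hβ₀ w) (S.mu_le hβ₀ w) ?_
  simpa only [mul_zero] using hpow.const_mul _

theorem regularWord_of_mu_ne_zero {w : ℕ → ℕ} {K : ℕ} (h : S.mu β w K ≠ 0) :
    S.RegularWord w K := by
  by_contra hw
  have hF (r : ℕ) : S.F w K r = 0 := by_contra fun hr => hw (S.regularWord_of_F_ne_zero hr)
  exact h (by simp [mu, hF])

theorem regularSeq_of_mu_pos {x : ℕ → ℕ} (h : ∀ k, 0 < S.mu β x k) : S.RegularSeq x :=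
  fun K => S.regularWord_of_mu_ne_zero (h K).ne' K le_rfl

theorem psiSeq_eq_monnaMap (β : ℝ) : S.psiSeq β = monnaMap (S.mu β) := by
  funext x
  refine tsum_congr fun k => Finset.sum_congr rfl fun i _ => S.mu_congr β fun j hj => ?_
  rcases eq_or_ne j k with rfl | hjk
  · simp only [lt_irrefl, if_false, update_self]
  · rw [if_pos (by omega), update_of_ne hjk]

end Measure

end NumerationSystem

theorem mu_eq_volume_psi_image_cylinder_general (S : NumerationSystem) {β : ℝ}
    (hroot : Polynomial.aeval β S.charPoly = 0) (hβ : 1 < β) (w : ℕ → ℕ) (K : ℕ) :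
    ENNReal.ofReal (S.mu β w K) =
      MeasureTheory.volume
        (S.psiSeq β '' {x : ℕ → ℕ | S.RegularSeq x ∧ ∀ i, i < K → x i = w i}) := by
  rw [S.psiSeq_eq_monnaMap]
  exact ((S.isCylinderContent_mu hroot (zero_lt_one.trans hβ)).volume_image_monnaMap_inter_cylinder
    (S.tendsto_mu hβ) (fun _ => S.regularSeq_of_mu_pos) w K).symm

/-- The extended `β`-adic Monna map transports the cylinder measure `μ`
to Lebesgue measure: `μ(Z) = λ(ψ_β(𝒦_Z))` for every cylinder set `Z`. -/
theorem mu_eq_volume_psi_image_cylinder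
    (S : NumerationSystem) (β : ℝ) (hβ : S.IsCharRoot β)
    (w : ℕ → ℕ) (K : ℕ) (hw : S.RegularWord w K) :
    S.mu β w K =
      (MeasureTheory.volume
        (S.psiSeq β '' {x : ℕ → ℕ | S.RegularSeq x ∧ ∀ i, i < K → x i = w i})).toReal := by
  rw [← mu_eq_volume_psi_image_cylinder_general S hβ.2.1 hβ.2.2.1 w K,
    ENNReal.toReal_ofReal (S.mu_nonneg (zero_le_one.trans hβ.2.2.1.le) w K)]
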